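/- Let n ≥ 1 be an integer and s ∈ (0,1). The Caffarelli–Silvestre Poisson kernel P_{n,s} satisfies the degenerate elliptic equation ∇_{x,y}·(y^{1−2s} ∇_{x,y} P_{n,s}) = 0 on ℝⁿ × (0,∞); explicitly, for every x ∈ ℝⁿ and y > 0: y · Δ_x P_{n,s}(x,y) + y · ∂²_y P_{n,s}(x,y) + (1−2s) · ∂_y P_{n,s}(x,y) = 0, where Δ_x denotes the Laplacian in the x-variables. -/

import Mathlib

/-!
Multiplication by `y ^ a` conjugates the operator `∂_y² + ((1 - a) / y) ∂_y` into
`∂_y² + ((1 + a) / y) ∂_y`, the radial Laplacian in "dimension `2 + a`". With `a = 2s`, the factor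
`y ^ (2s)` of the kernel turns the extension equation into the assertion that
`(‖x‖² + y²) ^ (-(n + 2s) / 2)` is harmonic in total dimension `D = n + 2 + 2s`, radially in `y`.
It is, since its exponent makes it the fundamental solution `|X| ^ (2 - D)`.
-/

open MeasureTheory Real Set

/-- The Caffarelli–Silvestre normalizing constant `c_{n,s} = Γ((n+2s)/2)/(π^{n/2} Γ(s))`. -/
noncomputable def csConst (n : ℕ) (s : ℝ) : ℝ :=
  Real.Gamma (((n : ℝ) + 2 * s) / 2) / (Real.pi ^ ((n : ℝ) / 2) * Real.Gamma s)

/-- The Caffarelli–Silvestre Poisson kernel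
`P_{n,s}(x,y) = c_{n,s} y^{2s} (|x|² + y²)^{−(n+2s)/2}` for `x ∈ ℝⁿ`, `y > 0`. -/
noncomputable def csKernel (n : ℕ) (s : ℝ) (x : EuclideanSpace ℝ (Fin n)) (y : ℝ) : ℝ :=
  csConst n s * y ^ (2 * s) * (‖x‖ ^ 2 + y ^ 2) ^ (-(((n : ℝ) + 2 * s) / 2))

open InnerProductSpace Laplacian Module Topology
open scoped RealInnerProductSpace

section Bessel

/-- `y` times the Bessel operator `∂_y² + (κ / y) ∂_y`, applied to `f` at `y`. The factor `y` avoids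
the division, as in the extension equation. -/
noncomputable def besselOp (κ : ℝ) (f : ℝ → ℝ) (y : ℝ) : ℝ :=
  y * deriv (deriv f) y + κ * deriv f y

theorem besselOp_const_mul (κ C : ℝ) (f : ℝ → ℝ) (y : ℝ) :
    besselOp κ (fun t => C * f t) y = C * besselOp κ f y := by
  simp only [besselOp, deriv_const_mul_field']
  ring

theorem hasDerivAt_rpow_mul {f : ℝ → ℝ} {f' a y : ℝ} (hy : y ≠ 0) (hf : HasDerivAt f f' y) :
    HasDerivAt (fun t => t ^ a * f t) (a * y ^ (a - 1) * f y + y ^ a * f') y :=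
  (hasDerivAt_rpow_const (Or.inl hy)).fun_mul hf

theorem deriv_deriv_rpow_mul {f : ℝ → ℝ} {a y : ℝ} (hy : y ≠ 0) (hf : ContDiffAt ℝ 2 f y) :
    deriv (deriv fun t => t ^ a * f t) y =
      a * (a - 1) * y ^ (a - 2) * f y + 2 * a * y ^ (a - 1) * deriv f y +
        y ^ a * deriv (deriv f) y := by
  have hf₁ : HasDerivAt f (deriv f y) y := (hf.differentiableAt two_ne_zero).hasDerivAt
  have hf₂ : HasDerivAt (deriv f) (deriv (deriv f) y) y :=
    ((hf.derivWithin (m := 1) (by norm_num)).differentiableAt one_ne_zero).hasDerivAt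
  have hderiv : deriv (fun t => t ^ a * f t) =ᶠ[𝓝 y]
      fun t => a * (t ^ (a - 1) * f t) + t ^ a * deriv f t := by
    filter_upwards [isOpen_ne.mem_nhds hy, hf.eventually (by simp)] with t ht hft
    rw [(hasDerivAt_rpow_mul ht (hft.differentiableAt two_ne_zero).hasDerivAt).deriv, mul_assoc]
  rw [hderiv.deriv_eq,
    (((hasDerivAt_rpow_mul hy hf₁).const_mul a).fun_add (hasDerivAt_rpow_mul hy hf₂)).deriv,
    show a - 1 - 1 = a - 2 by ring]
  ring

theorem besselOp_rpow_mul {f : ℝ → ℝ} {a y : ℝ} (hy : y ≠ 0) (hf : ContDiffAt ℝ 2 f y) :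
    besselOp (1 - a) (fun t => t ^ a * f t) y = y ^ a * besselOp (1 + a) f y := by
  have hpow₁ : y ^ (a - 1) * y = y ^ a := by rw [← rpow_add_one hy, sub_add_cancel]
  have hpow₂ : y ^ (a - 2) * y = y ^ (a - 1) := by
    rw [← rpow_add_one hy]; congr 1; ring
  rw [besselOp, besselOp, deriv_deriv_rpow_mul hy hf,
    (hasDerivAt_rpow_mul hy (hf.differentiableAt two_ne_zero).hasDerivAt).deriv]
  linear_combination a * (a - 1) * f y * hpow₂ + 2 * a * deriv f y * hpow₁

end Bessel

section NormSqPower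

variable {E : Type*} [NormedAddCommGroup E] [InnerProductSpace ℝ E] {b c : ℝ} {x : E}

theorem contDiffAt_norm_sq_add_const_rpow {k : WithTop ℕ∞} (hx : ‖x‖ ^ 2 + c ≠ 0) :
    ContDiffAt ℝ k (fun z : E => (‖z‖ ^ 2 + c) ^ b) x :=
  ((contDiff_norm_sq ℝ).contDiffAt.add contDiffAt_const).rpow_const_of_ne hx

theorem hasFDerivAt_norm_sq_add_const_rpow (hx : ‖x‖ ^ 2 + c ≠ 0) :
    HasFDerivAt (fun z : E => (‖z‖ ^ 2 + c) ^ b)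
      ((2 * b * (‖x‖ ^ 2 + c) ^ (b - 1)) • innerSL ℝ x) x := by
  refine (((hasStrictFDerivAt_norm_sq x).hasFDerivAt.add_const c).rpow_const
    (Or.inl hx)).congr_fderiv ?_
  module

theorem iteratedFDeriv_two_norm_sq_add_const_rpow (hx : ‖x‖ ^ 2 + c ≠ 0) (v w : E) :
    iteratedFDeriv ℝ 2 (fun z : E => (‖z‖ ^ 2 + c) ^ b) x ![v, w] =
      4 * b * (b - 1) * (‖x‖ ^ 2 + c) ^ (b - 2) * (⟪x, v⟫ * ⟪x, w⟫) +
        2 * b * (‖x‖ ^ 2 + c) ^ (b - 1) * ⟪v, w⟫ := by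
  have hgrad : fderiv ℝ (fun z : E => (‖z‖ ^ 2 + c) ^ b) =ᶠ[𝓝 x]
      fun z => (2 * b * (‖z‖ ^ 2 + c) ^ (b - 1)) • innerSL ℝ z := by
    have hcont : ContinuousAt (fun z : E => ‖z‖ ^ 2 + c) x := by fun_prop
    filter_upwards [hcont.eventually_ne hx] with z hz
    exact (hasFDerivAt_norm_sq_add_const_rpow hz).fderiv
  have hhess := ((hasFDerivAt_norm_sq_add_const_rpow (b := b - 1) hx).const_mul (2 * b)).fun_smul
    (innerSL ℝ : E →L[ℝ] E →L[ℝ] ℝ).hasFDerivAt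
  rw [iteratedFDeriv_two_apply, hgrad.fderiv_eq, hhess.fderiv, show b - 1 - 1 = b - 2 by ring]
  simp only [Matrix.cons_val_zero, Matrix.cons_val_one, Matrix.cons_val_fin_one, add_apply,
    smul_apply, ContinuousLinearMap.smulRight_apply, innerSL_apply_apply ℝ, smul_eq_mul]
  ring

variable [FiniteDimensional ℝ E]

theorem laplacian_norm_sq_add_const_rpow (hx : ‖x‖ ^ 2 + c ≠ 0) :
    Δ (fun z : E => (‖z‖ ^ 2 + c) ^ b) x =
      4 * b * (b - 1) * (‖x‖ ^ 2 + c) ^ (b - 2) * ‖x‖ ^ 2 +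
        2 * b * finrank ℝ E * (‖x‖ ^ 2 + c) ^ (b - 1) := by
  simp only [laplacian_eq_iteratedFDeriv_stdOrthonormalBasis,
    iteratedFDeriv_two_norm_sq_add_const_rpow hx, Finset.sum_add_distrib, ← Finset.mul_sum,
    ← pow_two, OrthonormalBasis.sum_sq_inner_left, real_inner_self_eq_norm_sq,
    OrthonormalBasis.norm_eq_one, one_pow, Finset.sum_const, Finset.card_univ, Fintype.card_fin,
    nsmul_eq_mul]
  ring

theorem laplacian_add_besselOp_norm_sq_add_sq_rpow {y : ℝ} (κ : ℝ) (h : ‖x‖ ^ 2 + y ^ 2 ≠ 0) :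
    y * Δ (fun z : E => (‖z‖ ^ 2 + y ^ 2) ^ b) x +
        besselOp κ (fun t : ℝ => (‖x‖ ^ 2 + t ^ 2) ^ b) y =
      2 * b * (finrank ℝ E + κ - 1 + 2 * b) * y * (‖x‖ ^ 2 + y ^ 2) ^ (b - 1) := by
  have hswap : (fun t : ℝ => (‖x‖ ^ 2 + t ^ 2) ^ b) = fun t => (‖t‖ ^ 2 + ‖x‖ ^ 2) ^ b := by
    simp [add_comm]
  have hy : ‖y‖ ^ 2 + ‖x‖ ^ 2 ≠ 0 := by rwa [norm_eq_abs, sq_abs, add_comm]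
  have hderiv₂ : deriv (deriv fun t : ℝ => (‖t‖ ^ 2 + ‖x‖ ^ 2) ^ b) y =
      Δ (fun t : ℝ => (‖t‖ ^ 2 + ‖x‖ ^ 2) ^ b) y := by
    rw [laplacian_eq_iteratedDeriv_real, iteratedDeriv_succ, iteratedDeriv_one]
  have hpow : (‖x‖ ^ 2 + y ^ 2) ^ (b - 2) * (‖x‖ ^ 2 + y ^ 2) =
      (‖x‖ ^ 2 + y ^ 2) ^ (b - 1) := by
    rw [← rpow_add_one h]; congr 1; ring
  rw [besselOp, hswap, hderiv₂, laplacian_norm_sq_add_const_rpow h,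
    laplacian_norm_sq_add_const_rpow hy, (hasFDerivAt_norm_sq_add_const_rpow hy).hasDerivAt.deriv]
  simp only [norm_eq_abs, sq_abs, add_comm (y ^ 2), finrank_self, Nat.cast_one,
    smul_apply, innerSL_apply_apply, smul_eq_mul, RCLike.inner_apply, conj_trivial, one_mul]
  linear_combination 4 * b * (b - 1) * y * hpow

end NormSqPower

theorem laplacian_eq_sum_fderiv_fderiv {ι E F : Type*} [Fintype ι] [NormedAddCommGroup E]
    [InnerProductSpace ℝ E] [FiniteDimensional ℝ E] [NormedAddCommGroup F] [NormedSpace ℝ F]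
    (v : OrthonormalBasis ι ℝ E) {f : E → F} {x : E} (hf : ContDiffAt ℝ 2 f x) :
    Δ f x = ∑ i, fderiv ℝ (fun z => fderiv ℝ f z (v i)) x (v i) := by
  have hf' : DifferentiableAt ℝ (fderiv ℝ f) x :=
    (hf.fderiv_right (m := 1) (by norm_num)).differentiableAt one_ne_zero
  rw [laplacian_eq_iteratedFDeriv_orthonormalBasis f v]
  refine Finset.sum_congr rfl fun i _ => ?_
  rw [iteratedFDeriv_two_apply, fderiv_clm_apply hf' (differentiableAt_const _)]
  simp

theorem csKernel_extension_equation_general {E : Type*} [NormedAddCommGroup E]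
    [InnerProductSpace ℝ E] [FiniteDimensional ℝ E] (C s : ℝ) {b : ℝ}
    (hb : b = -((finrank ℝ E + 2 * s) / 2)) (x : E) {y : ℝ} (hy : 0 < y) :
    y * Δ (fun z : E => C * y ^ (2 * s) * (‖z‖ ^ 2 + y ^ 2) ^ b) x +
        y * deriv (deriv fun t : ℝ => C * t ^ (2 * s) * (‖x‖ ^ 2 + t ^ 2) ^ b) y +
      (1 - 2 * s) * deriv (fun t : ℝ => C * t ^ (2 * s) * (‖x‖ ^ 2 + t ^ 2) ^ b) y = 0 := by
  have hR : ‖x‖ ^ 2 + y ^ 2 ≠ 0 := by positivity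
  have hU : ContDiffAt ℝ 2 (fun t : ℝ => (‖x‖ ^ 2 + t ^ 2) ^ b) y :=
    ContDiffAt.rpow_const_of_ne (by fun_prop) hR
  have hΔ : Δ (fun z : E => C * y ^ (2 * s) * (‖z‖ ^ 2 + y ^ 2) ^ b) x =
      C * y ^ (2 * s) * Δ (fun z : E => (‖z‖ ^ 2 + y ^ 2) ^ b) x :=
    laplacian_smul (C * y ^ (2 * s)) (contDiffAt_norm_sq_add_const_rpow (E := E) (b := b) hR)
  have hcritical : finrank ℝ E + (1 + 2 * s) - 1 + 2 * b = 0 := by rw [hb]; ring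
  calc
    _ = y * (C * y ^ (2 * s) * Δ (fun z : E => (‖z‖ ^ 2 + y ^ 2) ^ b) x) +
        besselOp (1 - 2 * s) (fun t => C * (t ^ (2 * s) * (‖x‖ ^ 2 + t ^ 2) ^ b)) y := by
      rw [hΔ]
      simp only [besselOp, mul_assoc C, add_assoc]
    _ = C * y ^ (2 * s) * (y * Δ (fun z : E => (‖z‖ ^ 2 + y ^ 2) ^ b) x +
        besselOp (1 + 2 * s) (fun t => (‖x‖ ^ 2 + t ^ 2) ^ b) y) := by
      rw [besselOp_const_mul, besselOp_rpow_mul hy.ne' hU]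
      ring
    _ = 0 := by
      rw [laplacian_add_besselOp_norm_sq_add_sq_rpow _ hR, hcritical]
      ring

theorem laplacian_csKernel_eq_sum {n : ℕ} {s y : ℝ} (x : EuclideanSpace ℝ (Fin n)) (hy : y ≠ 0) :
    Δ (fun z => csKernel n s z y) x =
      ∑ i : Fin n, fderiv ℝ (fun x' => fderiv ℝ (fun x'' => csKernel n s x'' y) x'
        (EuclideanSpace.single i 1)) x (EuclideanSpace.single i 1) := by
  have hP : ContDiffAt ℝ 2 (fun z => csKernel n s z y) x :=
    contDiffAt_const.mul (contDiffAt_norm_sq_add_const_rpow (by positivity))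
  simpa only [EuclideanSpace.basisFun_apply] using
    laplacian_eq_sum_fderiv_fderiv (EuclideanSpace.basisFun (Fin n) ℝ) hP

/-- **The Poisson kernel solves the degenerate extension equation.**
For every `x ∈ ℝⁿ` and `y > 0`,
`y·Δ_x P_{n,s}(x,y) + y·∂²_y P_{n,s}(x,y) + (1−2s)·∂_y P_{n,s}(x,y) = 0`,
i.e. `∇_{x,y}·(y^{1−2s} ∇_{x,y} P_{n,s}) = 0` on `ℝⁿ × (0,∞)`. -/
theorem csKernel_extension_equation
    (n : ℕ) (hn : 1 ≤ n) (s : ℝ) (hs : s ∈ Set.Ioo (0 : ℝ) 1)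
    (x : EuclideanSpace ℝ (Fin n)) (y : ℝ) (hy : 0 < y) :
    y * (∑ i : Fin n,
        fderiv ℝ (fun x' => fderiv ℝ (fun x'' => csKernel n s x'' y) x'
            (EuclideanSpace.single i 1)) x (EuclideanSpace.single i 1)) +
      y * deriv (deriv (fun t : ℝ => csKernel n s x t)) y +
      (1 - 2 * s) * deriv (fun t : ℝ => csKernel n s x t) y = 0 := by
  rw [← laplacian_csKernel_eq_sum x hy.ne']
  exact csKernel_extension_equation_general _ s (by rw [finrank_euclideanSpace_fin]) x hy
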